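/- Let T > 0 and let u : [0,T] × ℝ → ℝ be a bounded C¹ function with bounded spatial derivative which satisfies the nonlocal Fornberg–Whitham equation ∂ₜu + (3/2)u∂ₓu = H ∗ u(t,·) pointwise. Then for every t ∈ [0,T], sup_{x∈ℝ} |u(t,x)| ≤ e^{t} · sup_{x∈ℝ} |u(0,x)|. -/

import Mathlib

open Real Set MeasureTheory

/-- `H(x) = -(1/2) sign(x) e^{-|x|}`, the a.e. derivative of the kernel
`G(x) = (1/2) e^{-|x|}` of `(1 - ∂ₓ²)⁻¹`. -/
noncomputable def H (x : ℝ) : ℝ := -(1 / 2) * Real.sign x * Real.exp (-|x|)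

/-- The kernel `x ↦ e^{-|x|}` is integrable on the line. -/
theorem integrable_exp_neg_abs : Integrable (fun x : ℝ => Real.exp (-|x|)) := by
  have hpos : IntegrableOn (fun x : ℝ => Real.exp (-|x|)) (Ioi 0) :=
    (integrableOn_exp_neg_Ioi 0).congr_fun
      (fun x hx => by simp [abs_of_pos (show (0 : ℝ) < x from hx)]) measurableSet_Ioi
  have hneg : IntegrableOn (fun x : ℝ => Real.exp (-|x|)) (Iic 0) :=
    (integrableOn_exp_Iic 0).congr_fun
      (fun x hx => by simp [abs_of_nonpos (show x ≤ 0 from hx)]) measurableSet_Iic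
  rw [← integrableOn_univ, ← Iic_union_Ioi (a := (0 : ℝ))]
  exact hneg.union hpos

theorem integral_exp_neg_abs : ∫ x : ℝ, Real.exp (-|x|) = 2 := by
  rw [integral_comp_abs (f := fun x => Real.exp (-x)), integral_exp_neg_Ioi_zero, mul_one]

theorem abs_H_le (x : ℝ) : |H x| ≤ 1 / 2 * Real.exp (-|x|) := by
  have hsign : |Real.sign x| ≤ 1 := by
    rcases Real.sign_apply_eq x with h | h | h <;> simp [h]
  rw [H, abs_mul, abs_mul, abs_of_pos (Real.exp_pos _)]
  gcongr
  norm_num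
  linarith

/-- Convolution with `H` does not increase the sup-norm. -/
theorem abs_integral_H_mul_le {f : ℝ → ℝ} {C : ℝ} (hf : ∀ y, |f y| ≤ C) (x : ℝ) :
    |∫ y : ℝ, H (x - y) * f y| ≤ C := by
  have hint : Integrable (fun y : ℝ => C / 2 * Real.exp (-|x - y|)) :=
    (integrable_exp_neg_abs.comp_sub_left x).const_mul _
  calc |∫ y : ℝ, H (x - y) * f y| ≤ ∫ y : ℝ, C / 2 * Real.exp (-|x - y|) := by
        rw [← Real.norm_eq_abs]
        refine norm_integral_le_of_norm_le hint (ae_of_all _ fun y => ?_)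
        rw [norm_mul, Real.norm_eq_abs, Real.norm_eq_abs]
        calc |H (x - y)| * |f y| ≤ 1 / 2 * Real.exp (-|x - y|) * C :=
              mul_le_mul (abs_H_le _) (hf y) (abs_nonneg _) (by positivity)
          _ = C / 2 * Real.exp (-|x - y|) := by ring
    _ = C := by
        rw [integral_const_mul, integral_sub_left_eq_self (fun z : ℝ => Real.exp (-|z|)),
          integral_exp_neg_abs]
        ring

/-- A bounded vector field which is continuous in time and uniformly Lipschitz in space has, through
every point `(t, x)`, an integral curve on the whole interval `[0, t]`. -/
theorem exists_backward_integralCurve {v : ℝ → ℝ → ℝ} {L K : NNReal}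
    (hcont : ∀ x, Continuous fun t => v t x) (hlip : ∀ t, LipschitzWith K (v t))
    (hbdd : ∀ t x, |v t x| ≤ L) {t : ℝ} (ht : 0 ≤ t) (x : ℝ) :
    ∃ X : ℝ → ℝ, X t = x ∧ ∀ s ∈ Icc 0 t, HasDerivWithinAt X (v s (X s)) (Icc 0 t) s := by
  have hPL : IsPicardLindelof v (⟨t, ht, le_rfl⟩ : Icc (0 : ℝ) t) x (L * t.toNNReal) 0 L K := by
    refine ⟨fun s _ => (hlip s).lipschitzOnWith, fun y _ => (hcont y).continuousOn,
      fun s _ y _ => hbdd s y, ?_⟩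
    simp [ht]
  exact hPL.exists_eq_forall_mem_Icc_hasDerivWithinAt₀

/-- The chain rule for a differentiable function along a curve `s ↦ (s, X s)`. -/
theorem hasDerivWithinAt_comp_curve {u : ℝ → ℝ → ℝ} {X : ℝ → ℝ} {X' s : ℝ} {S : Set ℝ}
    (hu : DifferentiableAt ℝ (Function.uncurry u) (s, X s)) (hX : HasDerivWithinAt X X' S s) :
    HasDerivWithinAt (fun r => u r (X r))
      (deriv (fun r => u r (X s)) s + X' * deriv (u s) (X s)) S s := by
  set D := fderiv ℝ (Function.uncurry u) (s, X s)
  have htime : deriv (fun r => u r (X s)) s = D (1, 0) :=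
    (hu.hasFDerivAt.comp_hasDerivAt (f := fun r => (r, X s)) s ((hasDerivAt_id s).prodMk (hasDerivAt_const s (X s)))).deriv
  have hspace : deriv (u s) (X s) = D (0, 1) :=
    (hu.hasFDerivAt.comp_hasDerivAt (f := fun y => (s, y)) (X s)
      ((hasDerivAt_const (X s) s).prodMk (hasDerivAt_id (X s)))).deriv
  have hcurve : HasDerivWithinAt (fun r => u r (X r)) (D (1, X')) S s :=
    hu.hasFDerivAt.comp_hasDerivWithinAt (f := fun r => (r, X r)) s
      ((hasDerivWithinAt_id s S).prodMk hX)
  have hsplit : ((1 : ℝ), X') = (1, 0) + X' • ((0 : ℝ), (1 : ℝ)) := by simp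
  rwa [hsplit, map_add, map_smul, smul_eq_mul, ← htime, ← hspace] at hcurve

/-- For a bounded `C¹` solution `u` of the nonlocal Fornberg–Whitham equation
`∂ₜu + (3/2) u ∂ₓu = H ∗ u(t,·)` with bounded spatial derivative, the sup-norm grows at
most exponentially: `sup_x |u(t,x)| ≤ eᵗ sup_x |u(0,x)|`. -/
theorem FW_sup_growth (T : ℝ) (hT : 0 < T) (u : ℝ → ℝ → ℝ)
    (hu_smooth : ContDiff ℝ 1 (Function.uncurry u))
    (hu_bdd : ∃ M : ℝ, ∀ t x : ℝ, |u t x| ≤ M)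
    (hux_bdd : ∃ M : ℝ, ∀ t x : ℝ, |deriv (u t) x| ≤ M)
    (hFW : ∀ t ∈ Icc (0 : ℝ) T, ∀ x : ℝ,
      deriv (fun s : ℝ => u s x) t + (3 / 2) * u t x * deriv (u t) x =
        ∫ y : ℝ, H (x - y) * u t y) :
    ∀ t ∈ Icc (0 : ℝ) T, (⨆ x : ℝ, |u t x|) ≤ Real.exp t * ⨆ x : ℝ, |u 0 x| := by
  obtain ⟨M, hM⟩ := hu_bdd
  obtain ⟨N, hN⟩ := hux_bdd
  have hM0 : 0 ≤ M := (abs_nonneg _).trans (hM 0 0)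
  have hN0 : 0 ≤ N := (abs_nonneg _).trans (hN 0 0)
  set A := ⨆ x : ℝ, |u 0 x|
  have hA : ∀ x, |u 0 x| ≤ A := le_ciSup ⟨M, by rintro _ ⟨x, rfl⟩; exact hM 0 x⟩
  have hA0 : 0 ≤ A := (abs_nonneg _).trans (hA 0)
  have hdiff : Differentiable ℝ (Function.uncurry u) := hu_smooth.differentiable one_ne_zero
  have hspace : ∀ t, Differentiable ℝ (u t) := fun t =>
    hdiff.comp ((differentiable_const t).prodMk differentiable_id)
  have hcont : ∀ x, Continuous fun t => 3 / 2 * u t x := fun x =>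
    continuous_const.mul (hu_smooth.continuous.comp (continuous_id.prodMk continuous_const))
  have hlip : ∀ t, LipschitzWith (3 / 2 * N).toNNReal fun x => 3 / 2 * u t x := fun t => by
    refine lipschitzWith_of_nnnorm_deriv_le ((hspace t).const_mul _) fun x => ?_
    rw [← NNReal.coe_le_coe, coe_nnnorm, deriv_const_mul _ (hspace t x),
      Real.coe_toNNReal _ (by positivity), norm_mul, Real.norm_eq_abs, Real.norm_eq_abs,
      abs_of_pos (by norm_num)]
    gcongr
    exact hN t x
  have hbdd : ∀ t x, |3 / 2 * u t x| ≤ (3 / 2 * M).toNNReal := fun t x => by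
    rw [Real.coe_toNNReal _ (by positivity), abs_mul, abs_of_pos (by norm_num)]
    gcongr
    exact hM t x
  have hiter : ∀ n : ℕ, ∀ t ∈ Icc (0 : ℝ) T, ∀ x,
      |u t x| ≤ A * Real.exp t + M / 2 ^ n * Real.exp (2 * t) := by
    intro n
    induction n with
    | zero =>
      intro t ht x
      have h1 : 1 ≤ Real.exp (2 * t) := Real.one_le_exp (by linarith [ht.1])
      have h2 : 0 ≤ A * Real.exp t := by positivity
      have h3 := hM t x
      simp only [pow_zero, div_one]
      nlinarith
    | succ n ih =>
      intro t ht x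
      obtain ⟨X, hXt, hX⟩ := exists_backward_integralCurve hcont hlip hbdd ht.1 x
      have hderiv : ∀ s ∈ Icc 0 t, HasDerivWithinAt (fun r => u r (X r))
          (∫ y : ℝ, H (X s - y) * u s y) (Icc 0 t) s := fun s hs => by
        rw [← hFW s ⟨hs.1, hs.2.trans ht.2⟩]
        exact hasDerivWithinAt_comp_curve (hdiff _) (hX s hs)
      have hexp : ∀ s, HasDerivAt
          (fun r => A * Real.exp r + M / 2 ^ (n + 1) * Real.exp (2 * r))
          (A * Real.exp s + M / 2 ^ n * Real.exp (2 * s)) s := fun s => by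
        refine (((Real.hasDerivAt_exp s).const_mul A).add
          ((((hasDerivAt_id s).const_mul 2).exp).const_mul (M / 2 ^ (n + 1)))).congr_deriv ?_
        simp only [id, pow_succ]
        field_simp
      have hinit : ‖u 0 (X 0)‖ ≤
          A * Real.exp 0 + M / 2 ^ (n + 1) * Real.exp (2 * 0) := by
        have : 0 ≤ M / 2 ^ (n + 1) := by positivity
        simpa using (hA (X 0)).trans (by linarith)
      have key := image_norm_le_of_norm_deriv_right_le_deriv_boundary
        (fun s hs => (hderiv s hs).continuousWithinAt)
        (fun s hs => (hderiv s ⟨hs.1, hs.2.le⟩).mono_of_mem_nhdsWithin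
          (Icc_mem_nhdsGE_of_mem hs)) hinit hexp
        (fun s hs => abs_integral_H_mul_le (ih s ⟨hs.1, hs.2.le.trans ht.2⟩) (X s))
        (right_mem_Icc.2 ht.1)
      rwa [hXt] at key
  intro t ht
  refine ciSup_le fun x => ?_
  have hlim : Filter.Tendsto
      (fun n : ℕ => A * Real.exp t + M / 2 ^ n * Real.exp (2 * t)) Filter.atTop
      (nhds (A * Real.exp t + 0 * Real.exp (2 * t))) :=
    ((tendsto_const_nhds.div_atTop
      (tendsto_pow_atTop_atTop_of_one_lt one_lt_two)).mul_const _).const_add _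
  have hle := ge_of_tendsto' hlim fun n => hiter n t ht x
  linarith
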